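/- Let q = p^e with p an odd prime and e a positive integer, and let m ≥ 3 be odd, so that |D| = q^{m−1}. Then the code \overline{C_D}' generated by the rows of [I_{m+1} | G_2] has length q^{m−1} + m + 1, dimension m + 1, and minimum distance d' satisfying d' ≥ (q−1)q^{(m−3)/2}(q^{(m−1)/2} − 1) + 1. Moreover, its dual (\overline{C_D}')^⊥ has length q^{m−1} + m + 1, dimension q^{m−1}, and minimum distance d'^⊥ satisfying 2 ≤ d'^⊥ ≤ 3. -/

import Mathlib

open scoped Classical

noncomputable section

/-- The dual code under the standard inner product. -/
def dualCode {ι F : Type*} [Fintype ι] [CommRing F] (C : Set (ι → F)) : Set (ι → F) :=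
  {u | ∀ v ∈ C, ∑ i, u i * v i = 0}

/-- `d` is the minimum distance of the code `C`: the smallest Hamming weight of a
nonzero codeword. -/
def IsMinDist {ι F : Type*} [Fintype ι] [CommRing F] (C : Set (ι → F)) (d : ℕ) : Prop :=
  (∃ c ∈ C, c ≠ 0 ∧ hammingNorm c = d) ∧ ∀ c ∈ C, c ≠ 0 → d ≤ hammingNorm c

/-- The code generated by the rows of the block matrix `[I_k | G]`: the codeword
attached to a coefficient vector `v : Fin k → F` is `v` on the first `k`
coordinates and `v * G` on the remaining coordinates. -/
def genCode {ι F : Type*} [Fintype ι] [CommRing F] (k : ℕ) (G : Fin k → ι → F) :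
    Set ((Fin k ⊕ ι) → F) :=
  {w | ∃ v : Fin k → F, w = Sum.elim v fun d => ∑ j, v j * G j d}

/-!
Let `Q` be a nondegenerate quadratic form in an odd number `m` of variables over the field with `q`
elements, such as `Tr (x ^ 2)`, and let `χ` be a primitive additive character with values in `ℂ`.
Diagonalising `Q`, the sum `T y = ∑ x, χ (y * Q x)` is a product of `m` quadratic Gauss sums, so
that `|T y| ^ 2 = q ^ m` and, `m` being odd, `T y = η y * T 1` for the quadratic character `η`.
Hence `∑ y ≠ 0, T y = 0`, and the quadric `Q = 0` has `q ^ (m - 1)` points.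

The parity part of a codeword is an affine function `f + c` on the quadric. If `f ≠ 0`, then `f` is
the polar form of `Q` with some vector `b`; completing the square in the sum
`∑ y z x, χ (y * Q x + z * (f x + c))` that counts the zeros leaves a one-variable quadratic sum in
`z`, which is governed by `Q b`: either it does not depend on `y` and `∑ y ≠ 0, T y = 0` applies, or
it has absolute value `√q`. In both cases the zeros number at most
`q ^ (m - 2) + (q - 1) * q ^ ((m - 3) / 2)`.

For the dual code, `[-Gᵀ | I]` generates it, its words have weight at least two because no column of
`G` vanishes, and the column of `G` at the origin is `(1, s)`, where `s` is the vector of constant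
terms of the rows.
-/

section CharacterSums

lemma addChar_map_sum {A M ι : Type*} [AddCommMonoid A] [CommMonoid M] (ψ : AddChar A M)
    (s : Finset ι) (f : ι → A) : ψ (∑ i ∈ s, f i) = ∏ i ∈ s, ψ (f i) :=
  map_prod ψ.toMonoidHom (fun i ↦ Multiplicative.ofAdd (f i)) s

-- Substituting `x ↦ x + b` completes the square.
lemma sum_addChar_add_polar {R V : Type*} [CommRing R] [AddCommGroup V] [Module R V]
    [Fintype V] (χ : AddChar R ℂ) (Q : QuadraticForm R V) (b : V) :
    ∑ x, χ (Q x + QuadraticMap.polar Q b x) = χ (-Q b) * ∑ x, χ (Q x) := by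
  rw [← Equiv.sum_comp (Equiv.addRight b) fun x ↦ χ (Q x), Finset.mul_sum]
  refine Finset.sum_congr rfl fun x _ ↦ ?_
  rw [← AddChar.map_add_eq_mul, Equiv.coe_addRight, QuadraticMap.map_add Q x b,
    QuadraticMap.polar_comm Q x b]
  congr 1
  ring

variable {K : Type*} [Field K] [Fintype K] {χ : AddChar K ℂ}

lemma ringChar_ne_two_of_invertible_two (K : Type*) [Field K] [Invertible (2 : K)] :
    ringChar K ≠ 2 := fun h ↦
  Invertible.ne_zero (2 : K) (by exact_mod_cast (ringChar.spec K 2).2 h.dvd)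

/-- The quadratic character of a finite field with its values read in `ℂ`, so that it can be
paired with complex additive characters in a Gauss sum. -/
def complexQuadraticChar (K : Type*) [Field K] [Fintype K] : MulChar K ℂ :=
  (quadraticChar K).ringHomComp (Int.castRingHom ℂ)

lemma complexQuadraticChar_apply (a : K) : complexQuadraticChar K a = quadraticChar K a := rfl

lemma norm_complexQuadraticChar {a : K} (ha : a ≠ 0) : ‖complexQuadraticChar K a‖ = 1 := by
  rcases quadraticChar_dichotomy ha with h | h <;> simp [complexQuadraticChar_apply, h]

lemma complexQuadraticChar_pow_of_odd {n : ℕ} (hn : Odd n) (a : K) :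
    complexQuadraticChar K a ^ n = complexQuadraticChar K a := by
  rcases eq_or_ne a 0 with rfl | ha
  · simp [complexQuadraticChar_apply, hn.pos.ne']
  · rcases quadraticChar_dichotomy ha with h | h <;>
      simp [complexQuadraticChar_apply, h, hn.neg_one_pow]

lemma sum_complexQuadraticChar (hK : ringChar K ≠ 2) : ∑ a, complexQuadraticChar K a = 0 := by
  simp only [complexQuadraticChar_apply, ← Int.cast_sum, quadraticChar_sum_zero hK, Int.cast_zero]

lemma norm_sq_gaussSum_complexQuadraticChar (hK : ringChar K ≠ 2) (hχ : χ.IsPrimitive) :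
    ‖gaussSum (complexQuadraticChar K) χ‖ ^ 2 = Fintype.card K := by
  have hne : complexQuadraticChar K ≠ 1 :=
    (MulChar.ringHomComp_ne_one_iff Int.cast_injective).2 (quadraticChar_ne_one hK)
  have hquad : (complexQuadraticChar K).IsQuadratic :=
    (quadraticChar_isQuadratic K).comp _
  rw [← norm_pow, gaussSum_sq hne hquad hχ, norm_mul,
    norm_complexQuadraticChar (neg_ne_zero.2 one_ne_zero), one_mul, Complex.norm_natCast]

lemma card_mul_sum_filter_eq_zero (hχ : χ.IsPrimitive) {X : Type*} (s : Finset X)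
    (φ : X → K) (g : X → ℂ) :
    Fintype.card K * ∑ x ∈ s with φ x = 0, g x = ∑ y, ∑ x ∈ s, χ (y * φ x) * g x := by
  rw [Finset.sum_comm, Finset.sum_filter, Finset.mul_sum]
  refine Finset.sum_congr rfl fun x _ ↦ ?_
  rw [← Finset.sum_mul, AddChar.sum_mulShift _ hχ]
  split_ifs <;> simp

-- The equation `t ^ 2 = s` has `1 + η s` solutions, and `∑ s, χ (a * s) = 0`.
lemma sum_addChar_mul_sq (hK : ringChar K ≠ 2) (hχ : χ.IsPrimitive) {a : K} (ha : a ≠ 0) :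
    ∑ t, χ (a * t ^ 2) = complexQuadraticChar K a * gaussSum (complexQuadraticChar K) χ := by
  have hcard (s : K) : (Finset.card {t : K | t ^ 2 = s} : ℂ) = complexQuadraticChar K s + 1 := by
    have h := quadraticChar_card_sqrts hK s
    rw [Set.toFinset_ofPred] at h
    rw [complexQuadraticChar_apply]
    exact_mod_cast congrArg (Int.cast : ℤ → ℂ) h
  calc ∑ t, χ (a * t ^ 2)
      = ∑ s, ∑ t with t ^ 2 = s, χ (a * t ^ 2) := (Finset.sum_fiberwise _ _ _).symm
    _ = ∑ s, (complexQuadraticChar K s + 1) * χ (a * s) := by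
      refine Finset.sum_congr rfl fun s _ ↦ ?_
      rw [← hcard, ← nsmul_eq_mul, ← Finset.sum_const]
      refine Finset.sum_congr rfl fun t ht ↦ ?_
      rw [(Finset.mem_filter.1 ht).2]
    _ = gaussSum (complexQuadraticChar K) (χ.mulShift a) := by
      have hsum : ∑ s, χ (a * s) = 0 := by
        simpa [mul_comm a, ha] using AddChar.sum_mulShift a hχ
      simp only [add_mul, one_mul, Finset.sum_add_distrib, hsum, add_zero, gaussSum,
        AddChar.mulShift_apply]
    _ = complexQuadraticChar K a * gaussSum (complexQuadraticChar K) χ := by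
      have h := gaussSum_mulShift (complexQuadraticChar K) χ (Units.mk0 a ha)
      rw [Units.val_mk0] at h
      rw [← h, ← mul_assoc, ← sq, complexQuadraticChar_apply, ← Int.cast_pow,
        quadraticChar_sq_one ha, Int.cast_one, one_mul]

lemma norm_sq_sum_addChar_quadratic (hK : ringChar K ≠ 2) (hχ : χ.IsPrimitive) {a : K}
    (ha : a ≠ 0) (c : K) : ‖∑ z, χ (a * z ^ 2 + c * z)‖ ^ 2 = Fintype.card K := by
  have h2 : (2 : K) ≠ 0 := Ring.two_ne_zero hK
  have hpolar (z : K) : a * z ^ 2 + c * z = (a • QuadraticMap.sq : QuadraticForm K K) z +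
      QuadraticMap.polar (a • QuadraticMap.sq : QuadraticForm K K) (c / (2 * a)) z := by
    simp only [QuadraticMap.polar, smul_apply, QuadraticMap.sq_apply, smul_eq_mul]
    field_simp
    ring
  simp only [hpolar, sum_addChar_add_polar, norm_mul, AddChar.norm_apply, one_mul]
  simp only [smul_apply, QuadraticMap.sq_apply, smul_eq_mul, ← sq]
  rw [sum_addChar_mul_sq hK hχ ha, norm_mul, norm_complexQuadraticChar ha, one_mul,
    norm_sq_gaussSum_complexQuadraticChar hK hχ]

end CharacterSums

section QuadraticForms

open QuadraticMap

lemma exists_polar_eq {K V : Type*} [Field K] [Invertible (2 : K)] [AddCommGroup V] [Module K V]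
    [FiniteDimensional K V] {Q : QuadraticForm K V}
    (hQ : (associated (R := K) Q).Nondegenerate)
    (f : V →ₗ[K] K) : ∃ b, ∀ x, polar Q b x = f x := by
  refine ⟨(LinearMap.BilinForm.toDual _ hQ).symm (⅟(2 : K) • f), fun x ↦ ?_⟩
  have hpolar (b : V) : polar Q b x = 2 * associated (R := K) Q b x := by
    rw [← polarBilin_apply_apply, ← two_nsmul_associated K, LinearMap.smul_apply,
      LinearMap.smul_apply, nsmul_eq_mul, Nat.cast_ofNat]
  rw [hpolar, LinearMap.BilinForm.apply_toDual_symm_apply, LinearMap.smul_apply, smul_eq_mul,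
    mul_invOf_cancel_left]

variable {K V : Type*} [Field K] [Fintype K] [AddCommGroup V] [Module K V] [Fintype V]

lemma card_mul_card_linear_fiber {f : V →ₗ[K] K} (hf : f ≠ 0) (c : K) :
    Fintype.card K * Finset.card {x | f x = c} = Fintype.card V := by
  have hsurj : Function.Surjective f := LinearMap.surjective hf
  calc Fintype.card K * Finset.card {x | f x = c}
      = ∑ a : K, Finset.card {x | f x = a} := by
        rw [← smul_eq_mul, ← Finset.card_univ, ← Finset.sum_const]
        exact Finset.sum_congr rfl fun a _ ↦
          AddMonoidHom.card_fiber_eq_of_mem_range f (hsurj c) (hsurj a)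
    _ = Fintype.card V :=
        (Finset.card_eq_sum_card_fiberwise fun x _ ↦ Finset.mem_coe.2 (Finset.mem_univ (f x))).symm

lemma sum_sum_addChar_mul_add_polar (χ : AddChar K ℂ) (Q : QuadraticForm K V) (b : V) (c : K)
    {y : K} (hy : y ≠ 0) :
    ∑ z, ∑ x, χ (z * (polar Q b x + c)) * χ (y * Q x) =
      (∑ x, χ (y * Q x)) * ∑ z, χ (-(Q b / y) * z ^ 2 + c * z) := by
  rw [Finset.mul_sum]
  refine Finset.sum_congr rfl fun z _ ↦ ?_
  have hterm (x : V) : χ (z * (polar Q b x + c)) * χ (y * Q x) =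
      χ (c * z) * χ ((y • Q) x + polar (y • Q) ((z / y) • b) x) := by
    rw [← AddChar.map_add_eq_mul, ← AddChar.map_add_eq_mul, polar_smul_left,
      FunLike.coe_smul, polar_smul]
    congr 1
    simp only [Pi.smul_apply, smul_eq_mul]
    field_simp
    ring
  simp only [hterm, ← Finset.mul_sum, sum_addChar_add_polar]
  rw [← mul_assoc, ← AddChar.map_add_eq_mul, mul_comm]
  congr 2
  rw [smul_apply, QuadraticMap.map_smul, smul_eq_mul, smul_eq_mul]
  field_simp
  ring

lemma card_sq_mul_card_hyperplane_section {χ : AddChar K ℂ} (hχ : χ.IsPrimitive)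
    (Q : QuadraticForm K V) {f : V →ₗ[K] K} (hf : f ≠ 0) {b : V} (hb : ∀ x, polar Q b x = f x)
    (c : K) :
    (Fintype.card K : ℂ) ^ 2 * Finset.card {x | Q x = 0 ∧ f x + c = 0} = Fintype.card V +
      ∑ y ∈ Finset.univ.erase 0,
        (∑ x, χ (y * Q x)) * ∑ z, χ (-(Q b / y) * z ^ 2 + c * z) := by
  have hquadric : (Fintype.card K : ℂ) * Finset.card {x | Q x = 0 ∧ f x + c = 0} =
      ∑ y, ∑ x with f x + c = 0, χ (y * Q x) := by
    have h := card_mul_sum_filter_eq_zero hχ {x | f x + c = 0} Q 1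
    simpa [Finset.filter_filter, and_comm] using h
  have hhyperplane (y : K) : Fintype.card K * ∑ x with f x + c = 0, χ (y * Q x) =
      ∑ z, ∑ x, χ (z * (polar Q b x + c)) * χ (y * Q x) := by
    simp only [hb]
    exact card_mul_sum_filter_eq_zero hχ Finset.univ (f · + c) (χ <| y * Q ·)
  have hzero : Fintype.card K * ∑ x with f x + c = 0, χ (0 * Q x) = (Fintype.card V : ℂ) := by
    have h := card_mul_card_linear_fiber hf (-c)
    simp only [← eq_neg_iff_add_eq_zero, zero_mul, AddChar.map_zero_eq_one, Finset.sum_const,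
      nsmul_eq_mul, mul_one]
    exact_mod_cast h
  rw [pow_two, mul_assoc, hquadric, Finset.mul_sum, ← Finset.add_sum_erase _ _ (Finset.mem_univ 0),
    hzero]
  congr 1
  refine Finset.sum_congr rfl fun y hy ↦ ?_
  rw [hhyperplane, sum_sum_addChar_mul_add_polar χ Q b c (Finset.ne_of_mem_erase hy)]

variable {χ : AddChar K ℂ} [Invertible (2 : K)] {Q : QuadraticForm K V}

-- In an orthogonal basis the sum factors into one-dimensional sums.
lemma exists_sum_addChar_mul_eq_prod (hQ : (associated (R := K) Q).Nondegenerate)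
    (hχ : χ.IsPrimitive) : ∃ w : Fin (Module.finrank K V) → Kˣ, ∀ y ≠ 0,
      ∑ x, χ (y * Q x) =
        ∏ i, complexQuadraticChar K (y * w i) * gaussSum (complexQuadraticChar K) χ := by
  obtain ⟨w, ⟨e⟩⟩ := Q.equivalent_weightedSumSquares_units_of_nondegenerate' hQ.1
  refine ⟨w, fun y hy ↦ ?_⟩
  have hdiag (x : V) : χ (y * Q x) = ∏ i, χ (y * w i * e x i ^ 2) := by
    rw [← e.map_app x, weightedSumSquares_apply, Finset.mul_sum,
      addChar_map_sum]
    simp only [Units.smul_def, smul_eq_mul, pow_two, mul_assoc]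
  calc ∑ x, χ (y * Q x)
      = ∑ t : Fin (Module.finrank K V) → K, ∏ i, χ (y * w i * t i ^ 2) := by
        simp only [hdiag]
        exact Equiv.sum_comp e.toEquiv fun t : Fin (Module.finrank K V) → K ↦
          ∏ i, χ (y * w i * t i ^ 2)
    _ = ∏ i, ∑ z, χ (y * w i * z ^ 2) := by
        rw [Finset.prod_univ_sum, Fintype.piFinset_univ]
    _ = _ := Finset.prod_congr rfl fun i _ ↦
        sum_addChar_mul_sq (ringChar_ne_two_of_invertible_two K) hχ (mul_ne_zero hy (w i).ne_zero)

lemma norm_sq_sum_addChar_mul (hQ : (associated (R := K) Q).Nondegenerate)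
    (hχ : χ.IsPrimitive) {y : K} (hy : y ≠ 0) :
    ‖∑ x, χ (y * Q x)‖ ^ 2 = Fintype.card K ^ Module.finrank K V := by
  obtain ⟨w, hw⟩ := exists_sum_addChar_mul_eq_prod hQ hχ
  have hfactor (i) : ‖complexQuadraticChar K (y * w i) * gaussSum (complexQuadraticChar K) χ‖ ^ 2 =
      Fintype.card K := by
    rw [norm_mul, norm_complexQuadraticChar (mul_ne_zero hy (w i).ne_zero), one_mul,
      norm_sq_gaussSum_complexQuadraticChar (ringChar_ne_two_of_invertible_two K) hχ]
  rw [hw y hy, norm_prod, ← Finset.prod_pow, Finset.prod_congr rfl fun i _ ↦ hfactor i,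
    Finset.prod_const, Finset.card_univ, Fintype.card_fin]

lemma sum_addChar_mul_of_odd_finrank
    (hQ : (associated (R := K) Q).Nondegenerate)
    (hodd : Odd (Module.finrank K V)) (hχ : χ.IsPrimitive) {y : K} (hy : y ≠ 0) :
    ∑ x, χ (y * Q x) = complexQuadraticChar K y * ∑ x, χ (Q x) := by
  obtain ⟨w, hw⟩ := exists_sum_addChar_mul_eq_prod hQ hχ
  have hone := hw 1 one_ne_zero
  simp only [one_mul] at hone
  simp only [hw y hy, hone, map_mul, mul_assoc]
  rw [Finset.prod_mul_distrib, Finset.prod_const, Finset.card_univ, Fintype.card_fin,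
    complexQuadraticChar_pow_of_odd hodd]

lemma sum_erase_zero_sum_addChar_mul (hQ : (associated (R := K) Q).Nondegenerate)
    (hodd : Odd (Module.finrank K V)) (hχ : χ.IsPrimitive) :
    ∑ y ∈ Finset.univ.erase 0, ∑ x, χ (y * Q x) = 0 := by
  have hη : ∑ y ∈ Finset.univ.erase 0, complexQuadraticChar K y = 0 := by
    rw [Finset.sum_erase _ (MulChar.map_zero _),
      sum_complexQuadraticChar (ringChar_ne_two_of_invertible_two K)]
  rw [Finset.sum_congr rfl fun y hy ↦
    sum_addChar_mul_of_odd_finrank hQ hodd hχ (Finset.ne_of_mem_erase hy), ← Finset.sum_mul, hη,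
    zero_mul]

theorem card_mul_card_quadric (hQ : (associated (R := K) Q).Nondegenerate)
    (hodd : Odd (Module.finrank K V)) :
    Fintype.card K * Finset.card {x | Q x = 0} = Fintype.card V := by
  have hχ := AddChar.FiniteField.primitiveChar_to_Complex_isPrimitive K
  have h := card_mul_sum_filter_eq_zero hχ Finset.univ Q 1
  simp only [Pi.one_apply, mul_one] at h
  rw [← Finset.add_sum_erase _ _ (Finset.mem_univ 0),
    sum_erase_zero_sum_addChar_mul hQ hodd hχ] at h
  simp only [zero_mul, AddChar.map_zero_eq_one, Finset.sum_const, Finset.card_univ, nsmul_eq_mul,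
    mul_one, add_zero] at h
  exact_mod_cast h

lemma norm_sum_erase_zero_sum_addChar_mul_mul_le (hQ : (associated (R := K) Q).Nondegenerate)
    (hodd : Odd (Module.finrank K V)) (hχ : χ.IsPrimitive) (a c : K) :
    ‖∑ y ∈ Finset.univ.erase 0, (∑ x, χ (y * Q x)) * ∑ z, χ (-(a / y) * z ^ 2 + c * z)‖ ≤
      (Fintype.card K - 1) * √(Fintype.card V * Fintype.card K) := by
  have hq : (0 : ℝ) ≤ Fintype.card K - 1 := sub_nonneg.2 (by exact_mod_cast Fintype.card_pos)
  rcases eq_or_ne a 0 with rfl | ha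
  · simp only [zero_div, ← Finset.sum_mul, sum_erase_zero_sum_addChar_mul hQ hodd hχ, zero_mul,
      norm_zero]
    positivity
  · have hterm : ∀ y ∈ Finset.univ.erase (0 : K),
        ‖(∑ x, χ (y * Q x)) * ∑ z, χ (-(a / y) * z ^ 2 + c * z)‖ ≤
          √(Fintype.card V * Fintype.card K) := fun y hy ↦ by
      have hy0 := Finset.ne_of_mem_erase hy
      refine Real.le_sqrt_of_sq_le (le_of_eq ?_)
      rw [norm_mul, mul_pow, norm_sq_sum_addChar_mul hQ hχ hy0,
        norm_sq_sum_addChar_quadratic (ringChar_ne_two_of_invertible_two K) hχ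
          (neg_ne_zero.2 (div_ne_zero ha hy0)),
        Module.card_eq_pow_finrank (K := K) (V := V), Nat.cast_pow]
    refine (norm_sum_le_of_le _ hterm).trans_eq ?_
    rw [Finset.sum_const, Finset.card_erase_of_mem (Finset.mem_univ _), Finset.card_univ,
      nsmul_eq_mul, Nat.cast_pred Fintype.card_pos]

theorem abs_card_hyperplane_section_sub_le (hQ : (associated (R := K) Q).Nondegenerate)
    (hodd : Odd (Module.finrank K V)) {f : V →ₗ[K] K} (hf : f ≠ 0) (c : K) :
    |(Fintype.card K : ℝ) ^ 2 * Finset.card {x | Q x = 0 ∧ f x + c = 0} - Fintype.card V| ≤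
      (Fintype.card K - 1) * √(Fintype.card V * Fintype.card K) := by
  obtain ⟨b, hb⟩ := exists_polar_eq hQ f
  have hχ := AddChar.FiniteField.primitiveChar_to_Complex_isPrimitive K
  have hcount := card_sq_mul_card_hyperplane_section hχ Q hf hb c
  refine le_of_eq_of_le ?_
    (norm_sum_erase_zero_sum_addChar_mul_mul_le hQ hodd hχ (Q b) c)
  rw [← sub_eq_of_eq_add' hcount, ← Real.norm_eq_abs, ← Complex.norm_real]
  push_cast
  rfl

lemma card_hyperplane_section_le (hQ : (associated (R := K) Q).Nondegenerate) {j : ℕ}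
    (hdim : Module.finrank K V = 2 * j + 3) {f : V →ₗ[K] K} (hf : f ≠ 0) (c : K) :
    Finset.card {x | Q x = 0 ∧ f x + c = 0} ≤
      Fintype.card K ^ (2 * j + 1) + (Fintype.card K - 1) * Fintype.card K ^ j := by
  have h := (abs_le.1 (abs_card_hyperplane_section_sub_le hQ
    (hdim ▸ ⟨j + 1, by ring⟩) hf c)).2
  have hcard : (Fintype.card V : ℝ) = Fintype.card K ^ (2 * j + 3) := by
    rw [Module.card_eq_pow_finrank (K := K), hdim, Nat.cast_pow]
  have hsqrt : √(Fintype.card V * Fintype.card K) = (Fintype.card K : ℝ) ^ (j + 2) := by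
    rw [hcard, ← pow_succ, show 2 * j + 3 + 1 = (j + 2) * 2 by ring, pow_mul,
      Real.sqrt_sq (by positivity)]
  rw [hsqrt, hcard, sub_le_iff_le_add] at h
  have hq : (0 : ℝ) < (Fintype.card K : ℝ) ^ 2 := by
    exact_mod_cast pow_pos Fintype.card_pos 2
  rw [← Nat.cast_le (α := ℝ), Nat.cast_add, Nat.cast_mul, Nat.cast_pred Fintype.card_pos,
    Nat.cast_pow, Nat.cast_pow]
  refine le_of_mul_le_mul_left (h.trans_eq ?_) hq
  ring

end QuadraticForms

section Codes

lemma hammingNorm_sumElim {ι κ R : Type*} [Fintype ι] [Fintype κ] [DecidableEq R] [Zero R]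
    (u : ι → R) (v : κ → R) : hammingNorm (Sum.elim u v) = hammingNorm u + hammingNorm v := by
  simp only [hammingNorm, Finset.card_filter, Fintype.sum_sum_type, Sum.elim_inl, Sum.elim_inr]
  congr!

lemma hammingNorm_single {ι R : Type*} [Fintype ι] [DecidableEq ι] [DecidableEq R] [Zero R]
    (i : ι) {a : R} (ha : a ≠ 0) :
    hammingNorm (Pi.single i a : ι → R) = 1 :=
  Finset.card_eq_one.2 ⟨i, Finset.ext fun j ↦ by simp [Pi.single_apply, ha]⟩

lemma exists_isMinDist_of_bounds {ι R : Type*} [Fintype ι] [CommRing R] {C : Set (ι → R)}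
    {l u : ℕ} (hl : ∀ c ∈ C, c ≠ 0 → l ≤ hammingNorm c)
    (hu : ∃ c ∈ C, c ≠ 0 ∧ hammingNorm c ≤ u) : ∃ d, IsMinDist C d ∧ l ≤ d ∧ d ≤ u := by
  obtain ⟨c₀, hc₀C, hc₀, hc₀u⟩ := hu
  have hweight : ∃ d, ∃ c ∈ C, c ≠ 0 ∧ hammingNorm c = d := ⟨_, c₀, hc₀C, hc₀, rfl⟩
  have hmin (c) (hcC : c ∈ C) (hc : c ≠ 0) : Nat.find hweight ≤ hammingNorm c :=
    Nat.find_min' hweight ⟨c, hcC, hc, rfl⟩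
  obtain ⟨c, hcC, hc, hcd⟩ := Nat.find_spec hweight
  exact ⟨_, ⟨⟨c, hcC, hc, hcd⟩, hmin⟩, hcd ▸ hl c hcC hc, (hmin c₀ hc₀C hc₀).trans hc₀u⟩

variable {ι R : Type*} [Fintype ι] [CommRing R] {k : ℕ} {G : Fin k → ι → R}

lemma natCard_genCode [Fintype R] (G : Fin k → ι → R) :
    Nat.card (genCode k G) = Fintype.card R ^ k := by
  have hrange : genCode k G = Set.range fun v ↦ Sum.elim v fun d ↦ ∑ j, v j * G j d := by
    ext w
    simp only [genCode, Set.mem_ofPred, Set.mem_range, eq_comm]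
  have hinj : Function.Injective fun v : Fin k → R ↦ Sum.elim v fun d ↦ ∑ j, v j * G j d :=
    fun _ _ h ↦ funext fun i ↦ congrFun h (.inl i)
  rw [hrange, Nat.card_range_of_injective hinj, Nat.card_eq_fintype_card, Fintype.card_pi_const]

lemma mem_dualCode_genCode {u : Fin k ⊕ ι → R} :
    u ∈ dualCode (genCode k G) ↔ ∀ i, u (.inl i) + ∑ d, u (.inr d) * G i d = 0 := by
  have hpairing (v : Fin k → R) : ∑ x, u x * Sum.elim v (fun d ↦ ∑ j, v j * G j d) x =
      ∑ i, v i * (u (.inl i) + ∑ d, u (.inr d) * G i d) := by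
    simp only [Fintype.sum_sum_type, Sum.elim_inl, Sum.elim_inr, mul_add, Finset.sum_add_distrib,
      Finset.mul_sum]
    rw [Finset.sum_comm]
    simp only [mul_comm (u _) (v _), mul_left_comm]
  constructor
  · intro hu i
    have h := (hpairing (Pi.single i 1)).symm.trans (hu _ ⟨_, rfl⟩)
    simpa [Pi.single_apply] using h
  · rintro hu _ ⟨v, rfl⟩
    rw [hpairing]
    exact Finset.sum_eq_zero fun i _ ↦ by rw [hu, mul_zero]

lemma natCard_dualCode_genCode [Fintype R] (G : Fin k → ι → R) :
    Nat.card (dualCode (genCode k G)) = Fintype.card R ^ Fintype.card ι := by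
  have hrange : dualCode (genCode k G) =
      Set.range fun w ↦ Sum.elim (fun i ↦ -∑ d, w d * G i d) w := by
    ext u
    rw [mem_dualCode_genCode, Set.mem_range]
    constructor
    · exact fun hu ↦ ⟨fun d ↦ u (.inr d), funext fun x ↦ x.casesOn
        (fun i ↦ (eq_neg_of_add_eq_zero_left (hu i)).symm) fun _ ↦ rfl⟩
    · rintro ⟨w, rfl⟩ i
      exact neg_add_cancel _
  have hinj : Function.Injective fun w : ι → R ↦ Sum.elim (fun i ↦ -∑ d, w d * G i d) w :=
    fun _ _ h ↦ funext fun d ↦ congrFun h (.inr d)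
  rw [hrange, Nat.card_range_of_injective hinj, Nat.card_fun, Nat.card_eq_fintype_card,
    Nat.card_eq_fintype_card]

lemma two_le_hammingNorm_of_mem_dualCode {K : Type*} [Field K] {G : Fin k → ι → K}
    (hG : ∀ d, ∃ i, G i d ≠ 0) {u : Fin k ⊕ ι → K} (hu : u ∈ dualCode (genCode k G))
    (hu0 : u ≠ 0) : 2 ≤ hammingNorm u := by
  rw [mem_dualCode_genCode] at hu
  by_contra! hlt
  have hunique {x y} (hx : u x ≠ 0) (hy : u y ≠ 0) : x = y :=
    Finset.card_le_one.1 (Nat.lt_succ_iff.1 hlt) x (by simpa using hx) y (by simpa using hy)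
  have hinr (d) : u (.inr d) = 0 := by
    by_contra hd
    obtain ⟨i, hi⟩ := hG d
    have hzero {x} (hx : x ≠ .inr d) : u x = 0 := by
      by_contra h
      exact hx (hunique h hd)
    have hi' := hu i
    rw [hzero Sum.inl_ne_inr, zero_add, Finset.sum_eq_single d
      (fun d' _ hd' ↦ by rw [hzero (Sum.inr_injective.ne hd'), zero_mul]) (by simp)] at hi'
    exact mul_ne_zero hd hi hi'
  have hinl (i) : u (.inl i) = 0 := by simpa [hinr] using hu i
  exact hu0 (funext fun x ↦ x.casesOn hinl hinr)

lemma exists_mem_dualCode_genCode_hammingNorm_eq [Nontrivial R] (G : Fin k → ι → R) (d : ι) :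
    ∃ u ∈ dualCode (genCode k G), u ≠ 0 ∧ hammingNorm u = hammingNorm (G · d) + 1 := by
  refine ⟨Sum.elim (-(G · d)) (Pi.single d 1), ?_, fun h ↦ ?_, ?_⟩
  · rw [mem_dualCode_genCode]
    intro i
    simp [Pi.single_apply]
  · simpa using congrFun h (.inr d)
  · rw [hammingNorm_sumElim, hammingNorm_single d one_ne_zero]
    simp [hammingNorm]

end Codes

section QuadricCodes

open QuadraticMap

/-- The matrix whose columns are indexed by the points of the quadric `Q = 0`, with first row
constantly `1` and row `i + 1` the affine function `f i + s i`. -/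
def quadricMatrix {K V : Type*} [Field K] [AddCommGroup V] [Module K V] {k : ℕ}
    (Q : QuadraticForm K V) (f : Fin k → Module.Dual K V) (s : Fin k → K) :
    Fin (k + 1) → {x // Q x = 0} → K :=
  Fin.cons (fun _ ↦ 1) fun i x ↦ f i x + s i

variable {K V : Type*} [Field K] [AddCommGroup V] [Module K V] {k : ℕ}

lemma sum_mul_quadricMatrix (Q : QuadraticForm K V) (f : Fin k → Module.Dual K V) (s : Fin k → K)
    (v : Fin (k + 1) → K) (x : {x // Q x = 0}) :
    ∑ i, v i * quadricMatrix Q f s i x =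
      (∑ i, v i.succ • f i) x.1 + (v 0 + ∑ i, v i.succ * s i) := by
  simp only [quadricMatrix, Fin.sum_univ_succ, Fin.cons_zero, Fin.cons_succ, mul_one, mul_add,
    Finset.sum_add_distrib, LinearMap.sum_apply, LinearMap.smul_apply, smul_eq_mul]
  ring

lemma hammingNorm_quadricMatrix_zero (Q : QuadraticForm K V) (f : Fin k → Module.Dual K V)
    (s : Fin k → K) :
    hammingNorm (quadricMatrix Q f s · ⟨0, map_zero Q⟩) = hammingNorm s + 1 := by
  simp [hammingNorm, Finset.card_filter, Fin.sum_univ_succ, quadricMatrix, add_comm]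

lemma exists_isMinDist_dualCode_quadricMatrix [Fintype V] (Q : QuadraticForm K V)
    (f : Fin k → Module.Dual K V) (s : Fin k → K) :
    ∃ d, IsMinDist (dualCode (genCode (k + 1) (quadricMatrix Q f s))) d ∧ 2 ≤ d ∧
      d ≤ hammingNorm s + 2 := by
  obtain ⟨u, hu, hu0, hnorm⟩ :=
    exists_mem_dualCode_genCode_hammingNorm_eq (quadricMatrix Q f s) ⟨0, map_zero Q⟩
  refine exists_isMinDist_of_bounds (fun c hc ↦ two_le_hammingNorm_of_mem_dualCode ?_ hc)
    ⟨u, hu, hu0, ?_⟩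
  · exact fun x ↦ ⟨0, one_ne_zero⟩
  · rw [hnorm, hammingNorm_quadricMatrix_zero]

variable [Fintype K] [Fintype V] [Invertible (2 : K)] {Q : QuadraticForm K V}

lemma card_subtype_quadric (hQ : (associated (R := K) Q).Nondegenerate) {n : ℕ}
    (hdim : Module.finrank K V = n) (hn : Odd n) :
    Fintype.card {x // Q x = 0} = Fintype.card K ^ (n - 1) := by
  rw [Fintype.card_subtype]
  refine Nat.eq_of_mul_eq_mul_left (Fintype.card_pos (α := K)) ?_
  rw [card_mul_card_quadric hQ (hdim ▸ hn), Module.card_eq_pow_finrank (K := K), hdim,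
    ← pow_succ', Nat.sub_add_cancel hn.pos]

variable {f : Fin k → Module.Dual K V}

lemma card_sum_mul_quadricMatrix_eq_zero_le (hQ : (associated (R := K) Q).Nondegenerate) {j : ℕ}
    (hdim : Module.finrank K V = 2 * j + 3) (hf : LinearIndependent K f) (s : Fin k → K)
    {v : Fin (k + 1) → K} (hv : v ≠ 0) :
    Finset.card {x | ∑ i, v i * quadricMatrix Q f s i x = 0} ≤
      Fintype.card K ^ (2 * j + 1) + (Fintype.card K - 1) * Fintype.card K ^ j := by
  simp only [sum_mul_quadricMatrix]
  by_cases hg : ∑ i, v i.succ • f i = 0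
  · have hsucc := Fintype.linearIndependent_iff.1 hf _ hg
    have hv0 : v 0 ≠ 0 := fun h ↦ hv (funext fun i ↦ i.cases h hsucc)
    simp [hsucc, hv0]
  · refine le_of_eq_of_le ?_
      (card_hyperplane_section_le hQ hdim hg (v 0 + ∑ i, v i.succ * s i))
    rw [← Finset.card_map (Function.Embedding.subtype _)]
    congr 1
    ext x
    simp [and_comm]

lemma pow_eq_mul_add_add_mul {q : ℕ} (hq : 0 < q) (j : ℕ) :
    q ^ (2 * j + 2) =
      (q - 1) * q ^ j * (q ^ (j + 1) - 1) + (q ^ (2 * j + 1) + (q - 1) * q ^ j) := by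
  zify [hq, Nat.one_le_pow (j + 1) q hq]
  ring

lemma le_hammingNorm_of_mem_genCode_quadricMatrix (hQ : (associated (R := K) Q).Nondegenerate)
    {j : ℕ} (hdim : Module.finrank K V = 2 * j + 3) (hf : LinearIndependent K f) (s : Fin k → K)
    {c : Fin (k + 1) ⊕ {x // Q x = 0} → K} (hc : c ∈ genCode (k + 1) (quadricMatrix Q f s))
    (hc0 : c ≠ 0) :
    (Fintype.card K - 1) * Fintype.card K ^ j * (Fintype.card K ^ (j + 1) - 1) + 1 ≤
      hammingNorm c := by
  obtain ⟨v, rfl⟩ := hc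
  have hv : v ≠ 0 := by
    rintro rfl
    exact hc0 (funext fun x ↦ by cases x <;> simp)
  have hzeros := card_sum_mul_quadricMatrix_eq_zero_le hQ hdim hf s hv
  have hsplit := Finset.card_filter_add_card_filter_not (s := Finset.univ)
    fun x ↦ ∑ i, v i * quadricMatrix Q f s i x = 0
  rw [Finset.card_univ, card_subtype_quadric hQ hdim ⟨j + 1, by ring⟩,
    show 2 * j + 3 - 1 = 2 * j + 2 by omega, pow_eq_mul_add_add_mul Fintype.card_pos] at hsplit
  have hparity : hammingNorm (fun x ↦ ∑ i, v i * quadricMatrix Q f s i x) =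
    Finset.card {x | ¬ ∑ i, v i * quadricMatrix Q f s i x = 0} := rfl
  rw [hammingNorm_sumElim]
  have := hammingNorm_pos_iff.2 hv
  omega

theorem stmt13_general {m : ℕ} (hmodd : Odd m) (hm3 : 3 ≤ m)
    (hQ : (associated (R := K) Q).Nondegenerate) (hdim : Module.finrank K V = m)
    (hf : LinearIndependent K f) (s : Fin k → K) :
    Fintype.card (Fin (k + 1) ⊕ {x // Q x = 0}) = Fintype.card K ^ (m - 1) + k + 1 ∧
    Nat.card (genCode (k + 1) (quadricMatrix Q f s)) = Fintype.card K ^ (k + 1) ∧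
    (∀ c ∈ genCode (k + 1) (quadricMatrix Q f s), c ≠ 0 →
      (Fintype.card K - 1) * Fintype.card K ^ ((m - 3) / 2) *
        (Fintype.card K ^ ((m - 1) / 2) - 1) + 1 ≤ hammingNorm c) ∧
    Nat.card (dualCode (genCode (k + 1) (quadricMatrix Q f s))) =
      Fintype.card K ^ (Fintype.card K ^ (m - 1)) ∧
    ∃ d, IsMinDist (dualCode (genCode (k + 1) (quadricMatrix Q f s))) d ∧ 2 ≤ d ∧
      d ≤ hammingNorm s + 2 := by
  have hcard := card_subtype_quadric hQ hdim hmodd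
  refine ⟨?_, natCard_genCode _, fun c hc hc0 ↦ ?_, ?_,
    exists_isMinDist_dualCode_quadricMatrix Q f s⟩
  · rw [Fintype.card_sum, Fintype.card_fin, hcard, add_comm, add_assoc]
  · obtain ⟨j, rfl⟩ : ∃ j, m = 2 * j + 3 := ⟨(m - 3) / 2, by grind⟩
    convert le_hammingNorm_of_mem_genCode_quadricMatrix hQ hdim hf s hc hc0 using 4 <;> grind
  · rw [natCard_dualCode_genCode, hcard]

end QuadricCodes

section TraceForm

open QuadraticMap

variable (K L : Type*) [Field K] [Field L] [Algebra K L]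

/-- The quadratic form `x ↦ Tr (x ^ 2)`, a copy of the one attached to the trace form so that its
zero set is definitionally the set `D` of the paper. -/
def traceSq : QuadraticForm K L :=
  (Algebra.traceForm K L).toQuadraticMap.copy (fun x ↦ Algebra.trace K L (x ^ 2))
    (funext fun x ↦ by
      rw [LinearMap.BilinMap.toQuadraticMap_apply, Algebra.traceForm_apply, pow_two])

lemma associated_traceSq [Invertible (2 : K)] :
    associated (R := K) (traceSq K L) = Algebra.traceForm K L := by
  rw [traceSq, copy_eq]
  exact associated_left_inverse K (Algebra.traceForm_isSymm K).eq

lemma nondegenerate_associated_traceSq [Invertible (2 : K)] [FiniteDimensional K L]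
    [Algebra.IsSeparable K L] : (associated (R := K) (traceSq K L)).Nondegenerate := by
  rw [associated_traceSq]
  exact traceForm_nondegenerate K L

variable {K L}

lemma linearIndependent_pow_of_forall_exists_pow_eq [FiniteDimensional K L] {m : ℕ}
    (hdim : Module.finrank K L = m) {α : L} (hα : ∀ y ≠ 0, ∃ k : ℕ, α ^ k = y) :
    LinearIndependent K fun i : Fin m ↦ α ^ (i : ℕ) := by
  have htop : IntermediateField.adjoin K {α} = ⊤ := by
    refine eq_top_iff.2 fun y _ ↦ ?_
    rcases eq_or_ne y 0 with rfl | hy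
    · exact zero_mem _
    · obtain ⟨k, rfl⟩ := hα y hy
      exact pow_mem (IntermediateField.mem_adjoin_simple_self K α) k
  have hli := linearIndependent_pow (K := K) α
  rwa [(Field.primitive_element_iff_minpoly_natDegree_eq K α).1 htop, hdim] at hli

lemma linearIndependent_traceForm [FiniteDimensional K L] [Algebra.IsSeparable K L]
    {ι : Type*} {b : ι → L} (hb : LinearIndependent K b) :
    LinearIndependent K fun i ↦ Algebra.traceForm K L (b i) :=
  hb.map' (Algebra.traceForm K L) (traceForm_nondegenerate K L).ker_eq_bot

-- The shift `Pi.single 1 1` is the `+ 1` in the row of `α ^ 1`, which has index `2` in the matrix.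
lemma quadricMatrix_traceSq_single {m : ℕ} (hm : 1 < m) (α : L) (k : Fin (m + 1))
    (d : {x : L // traceSq K L x = 0}) :
    quadricMatrix (traceSq K L) (fun i : Fin m ↦ Algebra.traceForm K L (α ^ (i : ℕ)))
        (Pi.single ⟨1, hm⟩ 1) k d =
      if (k : ℕ) = 0 then 1
      else Algebra.trace K L (α ^ ((k : ℕ) - 1) * d.1) + (if (k : ℕ) = 2 then 1 else 0) := by
  cases k using Fin.cases with
  | zero => rfl
  | succ i => simp [quadricMatrix, Pi.single_apply, Fin.ext_iff]

end TraceForm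

theorem stmt13 (p e q m : ℕ) (hp : p.Prime) (hodd : Odd p) (he : 0 < e)
    (hq : q = p ^ e) (hmodd : Odd m) (hm3 : 3 ≤ m)
    (Fq Fm : Type) [Field Fq] [Field Fm] [Fintype Fq] [Fintype Fm] [Algebra Fq Fm]
    (hcq : Fintype.card Fq = q) (hcm : Fintype.card Fm = q ^ m)
    -- `α` is a primitive element of `F_{q^m}`
    (α : Fm) (hα : ∀ y : Fm, y ≠ 0 → ∃ k : ℕ, α ^ k = y)
    -- the matrix `G₂`
    (G2 : Fin (m + 1) → {x : Fm // Algebra.trace Fq Fm (x ^ 2) = 0} → Fq)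
    (hG2 : ∀ k d, G2 k d =
      if (k : ℕ) = 0 then 1
      else Algebra.trace Fq Fm (α ^ ((k : ℕ) - 1) * d.1)
        + (if (k : ℕ) = 2 then 1 else 0))
    (C' : Set ((Fin (m + 1) ⊕ {x : Fm // Algebra.trace Fq Fm (x ^ 2) = 0}) → Fq))
    (hC' : C' = genCode (m + 1) G2) :
    -- length `q^{m-1} + m + 1`
    Fintype.card (Fin (m + 1) ⊕ {x : Fm // Algebra.trace Fq Fm (x ^ 2) = 0})
      = q ^ (m - 1) + m + 1 ∧
    -- dimension `m + 1`
    Nat.card C' = q ^ (m + 1) ∧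
    -- minimum distance at least `(q-1)q^{(m-3)/2}(q^{(m-1)/2} - 1) + 1`
    (∀ c ∈ C', c ≠ 0 →
      (q - 1) * q ^ ((m - 3) / 2) * (q ^ ((m - 1) / 2) - 1) + 1 ≤ hammingNorm c) ∧
    -- the dual has dimension `q^{m-1}` and minimum distance between `2` and `3`
    Nat.card (dualCode C') = q ^ (q ^ (m - 1)) ∧
    (∃ d : ℕ, IsMinDist (dualCode C') d ∧ 2 ≤ d ∧ d ≤ 3) := by
  subst hC' hcq
  have hcard : Odd (Fintype.card Fq) := hq ▸ hodd.pow
  have h2 : (2 : Fq) ≠ 0 := Ring.two_ne_zero fun h ↦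
    Nat.not_even_iff_odd.2 hcard (Nat.even_iff.2 (FiniteField.even_card_iff_char_two.1 h))
  let : Invertible (2 : Fq) := invertibleOfNonzero h2
  have hdim : Module.finrank Fq Fm = m :=
    Nat.pow_right_injective Fintype.one_lt_card (Module.card_eq_pow_finrank.symm.trans hcm)
  have hm : 1 < m := by lia
  obtain rfl := funext₂ fun k d ↦ (hG2 k d).trans (quadricMatrix_traceSq_single hm α k d).symm
  have h := stmt13_general hmodd hm3 (nondegenerate_associated_traceSq Fq Fm) hdim
    (linearIndependent_traceForm (linearIndependent_pow_of_forall_exists_pow_eq hdim hα))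
    (Pi.single ⟨1, hm⟩ 1)
  rwa [hammingNorm_single _ one_ne_zero] at h
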